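/- Let A be an n×n dual quaternion Hermitian matrix with eigenvalues λ₁,…,λ_n. Then for every dual number λ, the characteristic polynomial p(λ) = Mdet(λ I − A) satisfies p(λ) = (λ − λ₁)(λ − λ₂) ⋯ (λ − λ_n). -/

import Mathlib

/-!
The proof passes to quaternions with coefficients in a commutative `ℚ`-algebra `K` and produces a
Hermitian analogue of the identity `B · adj B = det B · 1`.

Let `B` be a Hermitian matrix over `ℍ[K]`. Reversing one cycle of a permutation `σ` keeps its sign
and its other cycles, and conjugates the product of entries along that cycle. Averaging over
reversals replaces every cycle product in the Moore determinant by its real part, so that `Mdet B`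
is the scalar `realMoore B = Σ_σ sgn σ ∏_{cycles} Re (cycle product)` (`Mdet_eq_realMoore`). The
same averaging shows `B * mooreAdj B = realMoore B · 1` for an explicit matrix `mooreAdj B`
(`mul_mooreAdj`): an off-diagonal entry `(i, k)` is a sum over permutations in which the terms of
`τ` and `τ * swap i k` cancel, the first having `i` and `k` in different cycles and the second
merging these two cycles.

Apply this over `K[X]` to `X · 1 - A` and put `p = realMoore (X · 1 - A)`. It is monic of degree `n`
(`monic_qcharpoly`), and its derivative is the real part of the trace of `mooreAdj (X · 1 - A)`
(`derivative_qcharpoly`). If `U A U⁻¹ = diag (λ_i)`, conjugating the adjugate identity by `U` gives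
`(X - λ_i) Re M_ii = p` for `M = U * mooreAdj (X · 1 - A) * U⁻¹`, while `Σ_i Re M_ii = p'` because
the real part of the trace is invariant under conjugation. Hence with `q = ∏ (X - λ_i)` one gets
`q p' = q' p`, and two monic polynomials of the same degree over a `ℚ`-algebra with this property
are equal (`eq_of_logDeriv_eq`). No spectral theory over the zero-divisor ring of dual numbers is
needed.

Finally, dual quaternions embed into quaternions over the dual numbers (`splitDQ`), compatibly with
conjugation and with `Mdet`; evaluation of `p` at the given dual number gives the claim.
-/

/-!
Formalization background for "Moore Determinant of Dual Quaternion Hermitian Matrices"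
(Cui, Qi, Song, Wang).

A dual quaternion is `q = q_s + q_d ε` with `q_s, q_d` quaternions, `ε² = 0`; it is modeled
by `DualNumber (Quaternion ℝ)`.
-/

open Quaternion Matrix

noncomputable section

/-- Dual quaternions: dual numbers over the quaternions. -/
abbrev DualQuaternion : Type := DualNumber (Quaternion ℝ)

namespace DQPaper

/-- Conjugation of dual quaternions: `(q_s + q_d ε)* = q_s* + q_d* ε`. -/
instance : Star DualQuaternion := ⟨fun q => (star q.fst, star q.snd)⟩

/-- The real part of a dual quaternion `q = q_s + q_d ε`, as the dual number
`Re(q_s) + Re(q_d) ε`. -/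
def dqRe (q : DualQuaternion) : DualNumber ℝ := (q.fst.re, q.snd.re)

/-- The embedding of the dual numbers into the dual quaternions. -/
def toDQ (d : DualNumber ℝ) : DualQuaternion := ((d.fst : ℍ[ℝ]), (d.snd : ℍ[ℝ]))

/-- A dual quaternion is a dual number if its standard and dual parts are both real. -/
def IsDualNum (q : DualQuaternion) : Prop := ∃ d : DualNumber ℝ, q = toDQ d

/-- A dual number `a + b ε` is nonnegative if `a > 0`, or `a = 0` and `b ≥ 0`. -/
def DNNonneg (u : DualNumber ℝ) : Prop := 0 < u.fst ∨ (u.fst = 0 ∧ 0 ≤ u.snd)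

/-- The order on dual numbers: `u ≤ v` iff `v - u` is nonnegative. -/
def dnLe (u v : DualNumber ℝ) : Prop := DNNonneg (v - u)

open Classical in
/-- The magnitude of a dual quaternion `p = p_s + p_d ε`, as a dual number:
`|p| = |p_s| + ((p_s* p_d + p_d* p_s)/(2|p_s|)) ε` if `p_s ≠ 0`, and `|p| = |p_d| ε`
otherwise. -/
def dqMag (p : DualQuaternion) : DualNumber ℝ :=
  if p.fst = 0 then (0, ‖p.snd‖)
  else (‖p.fst‖, ((star p.fst * p.snd + star p.snd * p.fst).re) / (2 * ‖p.fst‖))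

/-- The cycle of the permutation `σ` containing `i`, listed as `[i, σ i, σ² i, …]`. -/
def cycleList {n : ℕ} (σ : Equiv.Perm (Fin n)) (i : Fin n) : List (Fin n) :=
  i :: (((List.range n).map (fun k => (σ ^ (k + 1)) i)).takeWhile (fun j => decide (j ≠ i)))

/-- The leaders (largest element of each cycle) of `σ`, listed in decreasing order;
this is the normalization used in the Chen determinant. -/
def chenLeaders {n : ℕ} (σ : Equiv.Perm (Fin n)) : List (Fin n) :=
  ((List.finRange n).filter (fun i => (cycleList σ i).all (fun j => decide (j ≤ i)))).reverse

/-- All of `Fin n` listed in the normalized cycle order of the Chen determinant: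
each cycle is led by its largest element, and cycles are ordered by decreasing leaders
(so the first cycle contains the last index). -/
def chenOrder {n : ℕ} (σ : Equiv.Perm (Fin n)) : List (Fin n) :=
  ((chenLeaders σ).map (cycleList σ)).flatten

/-- The Chen determinant of a square matrix over a (possibly noncommutative) ring:
`Cdet A = Σ_σ (−1)^{n−r} a_σ`, where `σ` runs over all permutations written in the
normalized cycle form with `r` disjoint cycles, and `a_σ` is the ordered product of the
entries `A i (σ i)` along the normalized cycle order. -/
def Cdet {n : ℕ} {R : Type*} [Ring R] (A : Matrix (Fin n) (Fin n) R) : R :=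
  ∑ σ : Equiv.Perm (Fin n),
    (-1 : R) ^ (n - (chenLeaders σ).length) * ((chenOrder σ).map (fun i => A i (σ i))).prod

/-- The leaders (smallest element of each cycle) of `σ`, listed in decreasing order;
this is the normalization used in the Moore determinant. -/
def mooreLeaders {n : ℕ} (σ : Equiv.Perm (Fin n)) : List (Fin n) :=
  ((List.finRange n).filter (fun i => (cycleList σ i).all (fun j => decide (i ≤ j)))).reverse

/-- All of `Fin n` listed in the normalized cycle order of the Moore determinant:
each cycle is led by its smallest element, and cycles are ordered by decreasing leaders. -/
def mooreOrder {n : ℕ} (σ : Equiv.Perm (Fin n)) : List (Fin n) :=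
  ((mooreLeaders σ).map (cycleList σ)).flatten

/-- The Moore determinant of a square matrix over a (possibly noncommutative) ring:
`Mdet A = Σ_σ s(σ) a_σ`, where `s(σ)` is the sign of `σ` and `a_σ` is the ordered product
of the entries `A i (σ i)` along the normalized (Moore) cycle order. -/
def Mdet {n : ℕ} {R : Type*} [Ring R] (A : Matrix (Fin n) (Fin n) R) : R :=
  ∑ σ : Equiv.Perm (Fin n),
    ((Equiv.Perm.sign σ : ℤ) : R) * ((mooreOrder σ).map (fun i => A i (σ i))).prod

/-- The switching matrix `P_{ij}`: the identity matrix with rows `i` and `j` interchanged. -/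
def switchMatrix {R : Type*} [Ring R] {n : ℕ} (i j : Fin n) : Matrix (Fin n) (Fin n) R :=
  Matrix.of fun k l =>
    if (k = i ∧ l = j) ∨ (k = j ∧ l = i) ∨ (k = l ∧ k ≠ i ∧ k ≠ j) then 1 else 0

/-- The multiplication matrix `P_{i;c}`: the identity matrix with the `(i,i)` entry
replaced by `c`. -/
def mulMatrix {R : Type*} [Ring R] {n : ℕ} (i : Fin n) (c : R) : Matrix (Fin n) (Fin n) R :=
  Matrix.of fun k l => if k = l then (if k = i then c else 1) else 0

/-- The addition matrix `P_{ij;c}`: the identity matrix with an extra entry `c` in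
position `(j,i)`, so that `P_{ij;c} * A` adds `c` times row `i` of `A` to row `j`. -/
def addMatrix {R : Type*} [Ring R] {n : ℕ} (i j : Fin n) (c : R) : Matrix (Fin n) (Fin n) R :=
  Matrix.of fun k l => (if k = l then 1 else 0) + (if k = j ∧ l = i then c else 0)

/-- The product `A i₁ i₂ * A i₂ i₃ * ⋯ * A i_{m-1} i_m` of matrix entries along a chain of
indices `[i₁, …, i_m]`; applied to a closed chain `[i₁, …, i_m, i₁]` it gives the cycle
product `⟨i₁ … i_m i₁⟩ = a_{i₁ i₂} ⋯ a_{i_m i₁}`. -/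
def chainProd {n : ℕ} (A : Matrix (Fin n) (Fin n) DualQuaternion) :
    List (Fin n) → DualQuaternion
  | [] => 1
  | [_] => 1
  | i :: j :: rest => A i j * chainProd A (j :: rest)

/-- A dual number `lam` is a (right) eigenvalue of the dual quaternion matrix `A` if
`A x = x lam` for some appreciable dual quaternion vector `x` (i.e. one whose standard
part is nonzero). -/
def IsEigenvalue {n : ℕ} (A : Matrix (Fin n) (Fin n) DualQuaternion)
    (lam : DualNumber ℝ) : Prop :=
  ∃ x : Fin n → DualQuaternion,
    (fun i => (x i).fst) ≠ 0 ∧ A.mulVec x = fun i => x i * toDQ lam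

/-- The dual quaternion Hermitian matrix `A` has the dual numbers `lam 1, …, lam n` as its
eigenvalues (counted with multiplicity), via the unitary diagonalization `U A U* = diag(lam)`
of Qi and Luo (2023). -/
def HasEigenvalues {n : ℕ} (A : Matrix (Fin n) (Fin n) DualQuaternion)
    (lam : Fin n → DualNumber ℝ) : Prop :=
  ∃ U : Matrix (Fin n) (Fin n) DualQuaternion,
    Uᴴ * U = 1 ∧ U * A * Uᴴ = Matrix.diagonal fun i => toDQ (lam i)

/-! ### Products of entries along cycles of a permutation -/

section Walks

open Function Equiv

variable {n : ℕ} {D : Type*} [Ring D]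

/-- The product `B x (f x) * B (f x) (f² x) * ⋯` of the `m` entries of `B` met when iterating `f`
from `x`. -/
def walk (B : Matrix (Fin n) (Fin n) D) (f : Fin n → Fin n) : ℕ → Fin n → D
  | 0, _ => 1
  | m + 1, x => B x (f x) * walk B f m (f x)

theorem walk_add (B : Matrix (Fin n) (Fin n) D) (f : Fin n → Fin n) (a b : ℕ) (x : Fin n) :
    walk B f (a + b) x = walk B f a x * walk B f b (f^[a] x) := by
  induction a generalizing x with
  | zero => simp [walk]
  | succ a ih =>
    rw [Nat.succ_add, walk, ih, walk, mul_assoc, Function.iterate_succ_apply]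

theorem walk_congr (B : Matrix (Fin n) (Fin n) D) {f g : Fin n → Fin n} {m : ℕ} {x : Fin n}
    (h : ∀ t ≤ m, f^[t] x = g^[t] x) : walk B f m x = walk B g m x := by
  induction m generalizing x with
  | zero => rfl
  | succ m ih =>
    have h1 : f x = g x := h 1 (by omega)
    rw [walk, walk, h1, ih]
    intro t ht
    have := h (t + 1) (by omega)
    rwa [Function.iterate_succ_apply, Function.iterate_succ_apply, h1] at this

/-- The product of the entries of `B` along the cycle of `σ` through `x`, starting at `x`. -/
def cyc (B : Matrix (Fin n) (Fin n) D) (σ : Perm (Fin n)) (x : Fin n) : D :=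
  walk B σ (minimalPeriod σ x) x

theorem mem_periodicPts_perm (σ : Perm (Fin n)) (x : Fin n) : x ∈ periodicPts σ :=
  σ.injective.mem_periodicPts x

theorem per_pos (σ : Perm (Fin n)) (x : Fin n) : 0 < minimalPeriod σ x :=
  minimalPeriod_pos_of_mem_periodicPts (mem_periodicPts_perm σ x)

theorem cyc_eq_mul (B : Matrix (Fin n) (Fin n) D) (σ : Perm (Fin n)) (x : Fin n) :
    cyc B σ x = B x (σ x) * walk B σ (minimalPeriod σ x - 1) (σ x) := by
  obtain ⟨m, hm⟩ := Nat.exists_eq_add_of_lt (per_pos σ x)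
  rw [cyc, hm]
  simp [walk]

/-- Starting a cycle one step later moves its first factor to the end. -/
theorem cyc_apply (B : Matrix (Fin n) (Fin n) D) (σ : Perm (Fin n)) (x : Fin n) :
    cyc B σ (σ x) = walk B σ (minimalPeriod σ x - 1) (σ x) * B x (σ x) := by
  obtain ⟨m, hm⟩ := Nat.exists_eq_add_of_lt (per_pos σ x)
  have hx : σ^[m] (σ x) = x := by
    have := iterate_minimalPeriod (f := σ) (x := x)
    rwa [hm, zero_add, Function.iterate_succ_apply] at this
  rw [cyc, minimalPeriod_apply (mem_periodicPts_perm σ x), hm]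
  simp only [zero_add, Nat.add_sub_cancel]
  rw [walk_add, hx]
  simp [walk]

theorem sameCycle_iff_iterate {σ : Perm (Fin n)} {x y : Fin n} :
    σ.SameCycle x y ↔ ∃ t : ℕ, σ^[t] x = y := by
  constructor
  · intro h
    obtain ⟨t, ht⟩ := h.exists_nat_pow_eq
    exact ⟨t, by rw [Perm.iterate_eq_pow]; exact ht⟩
  · rintro ⟨t, rfl⟩
    rw [Perm.iterate_eq_pow]
    exact Perm.sameCycle_pow_right.2 (Perm.SameCycle.refl _ _)

theorem sameCycle_iterate (σ : Perm (Fin n)) (x : Fin n) (t : ℕ) : σ.SameCycle x (σ^[t] x) :=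
  sameCycle_iff_iterate.2 ⟨t, rfl⟩

/-- `x` is the smallest element of its cycle under `σ`; each cycle is represented by its leader. -/
def IsLeader (σ : Perm (Fin n)) (x : Fin n) : Prop := ∀ y, σ.SameCycle x y → x ≤ y

/-- Permutations that agree on the `σ`-cycle of `x` have the same orbit of `x`. -/
theorem iterate_agree {σ τ : Perm (Fin n)} {x : Fin n}
    (h : ∀ y, σ.SameCycle x y → τ y = σ y) (t : ℕ) : τ^[t] x = σ^[t] x := by
  induction t with
  | zero => rfl
  | succ t ih =>
    rw [Function.iterate_succ_apply', Function.iterate_succ_apply', ih,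
      h _ (sameCycle_iterate σ x t)]

theorem sameCycle_agree {σ τ : Perm (Fin n)} {x : Fin n}
    (h : ∀ t : ℕ, τ^[t] x = σ^[t] x) (y : Fin n) : τ.SameCycle x y ↔ σ.SameCycle x y := by
  simp only [sameCycle_iff_iterate, h]

theorem isLeader_agree {σ τ : Perm (Fin n)} {x : Fin n}
    (h : ∀ t : ℕ, τ^[t] x = σ^[t] x) : IsLeader τ x ↔ IsLeader σ x := by
  simp only [IsLeader, sameCycle_agree h]

theorem cyc_agree (B : Matrix (Fin n) (Fin n) D) {σ τ : Perm (Fin n)} {x : Fin n}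
    (h : ∀ t : ℕ, τ^[t] x = σ^[t] x) : cyc B τ x = cyc B σ x := by
  have hp : minimalPeriod τ x = minimalPeriod σ x := by
    rw [minimalPeriod_eq_minimalPeriod_iff]
    intro t
    rw [IsPeriodicPt, IsPeriodicPt, IsFixedPt, IsFixedPt, h]
  rw [cyc, cyc, hp]
  exact walk_congr B fun t _ => h t

theorem exists_unique_leader (σ : Perm (Fin n)) (x : Fin n) :
    ∃ y, σ.SameCycle x y ∧ IsLeader σ y ∧ ∀ z, σ.SameCycle x z → IsLeader σ z → z = y := by
  classical
  have hne : (Finset.univ.filter fun y => σ.SameCycle x y).Nonempty :=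
    ⟨x, by simp [Perm.SameCycle.refl]⟩
  obtain ⟨y, hy, hmin⟩ := Finset.exists_min_image _ id hne
  simp only [Finset.mem_filter, Finset.mem_univ, true_and, id] at hy hmin
  refine ⟨y, hy, fun z hz => hmin z (hy.trans hz), fun z hz hl => ?_⟩
  exact le_antisymm (hl y (hz.symm.trans hy)) (hmin z hz)

end Walks

/-! ### Reversing one cycle -/

section Flip

open Function Equiv

variable {n : ℕ}

/-- The permutation obtained from `σ` by reversing the direction of the cycle through `x`. -/
def flipCycle (x : Fin n) (σ : Perm (Fin n)) : Perm (Fin n) :=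
  σ * ((σ.cycleOf x)⁻¹ * (σ.cycleOf x)⁻¹)

theorem sign_flip (x : Fin n) (σ : Perm (Fin n)) : Perm.sign (flipCycle x σ) = Perm.sign σ := by
  simp [flipCycle]

theorem flip_apply_of_same {x y : Fin n} {σ : Perm (Fin n)} (h : σ.SameCycle x y) :
    flipCycle x σ y = σ⁻¹ y := by
  have h1 : (σ⁻¹).SameCycle x y := Perm.sameCycle_inv.2 h
  have h2 : (σ⁻¹).SameCycle x (σ⁻¹ y) := Perm.sameCycle_apply_right.2 h1
  rw [flipCycle, Perm.mul_apply, Perm.mul_apply, Perm.cycleOf_inv,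
    h1.cycleOf_apply, h2.cycleOf_apply]
  simp

theorem flip_apply_of_not_same {x y : Fin n} {σ : Perm (Fin n)} (h : ¬ σ.SameCycle x y) :
    flipCycle x σ y = σ y := by
  have h1 : ¬ (σ⁻¹).SameCycle x y := fun h' => h (Perm.sameCycle_inv.1 h')
  rw [flipCycle, Perm.mul_apply, Perm.mul_apply, Perm.cycleOf_inv,
    Perm.cycleOf_apply_of_not_sameCycle h1, Perm.cycleOf_apply_of_not_sameCycle h1]

theorem flip_iterate_self (x : Fin n) (σ : Perm (Fin n)) (t : ℕ) :
    (flipCycle x σ)^[t] x = (σ⁻¹ : Perm (Fin n))^[t] x :=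
  iterate_agree (σ := σ⁻¹) (fun _ hy => flip_apply_of_same (Perm.sameCycle_inv.1 hy)) t

theorem flip_iterate_of_not_same {x y : Fin n} {σ : Perm (Fin n)} (h : ¬ σ.SameCycle x y)
    (t : ℕ) : (flipCycle x σ)^[t] y = σ^[t] y :=
  iterate_agree (fun _ hz => flip_apply_of_not_same fun h' => h (h'.trans hz.symm)) t

theorem sameCycle_flip_self (x y : Fin n) (σ : Perm (Fin n)) :
    (flipCycle x σ).SameCycle x y ↔ σ.SameCycle x y := by
  rw [sameCycle_agree (flip_iterate_self x σ), Perm.sameCycle_inv]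

theorem sameCycle_flip (x y z : Fin n) (σ : Perm (Fin n)) :
    (flipCycle x σ).SameCycle y z ↔ σ.SameCycle y z := by
  by_cases h : σ.SameCycle x y
  · have h' := (sameCycle_flip_self x y σ).2 h
    have := sameCycle_flip_self x z σ
    exact ⟨fun k => h.symm.trans (this.1 (h'.trans k)),
      fun k => h'.symm.trans (this.2 (h.trans k))⟩
  · exact sameCycle_agree (flip_iterate_of_not_same h) z

theorem isLeader_flip (x y : Fin n) (σ : Perm (Fin n)) :
    IsLeader (flipCycle x σ) y ↔ IsLeader σ y := by
  simp only [IsLeader, sameCycle_flip]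

theorem flip_flip (x : Fin n) (σ : Perm (Fin n)) : flipCycle x (flipCycle x σ) = σ := by
  ext1 y
  by_cases h : σ.SameCycle x y
  · rw [flip_apply_of_same ((sameCycle_flip_self x y σ).2 h), Perm.inv_eq_iff_eq,
      flip_apply_of_same (Perm.sameCycle_apply_right.2 h)]
    simp
  · rw [flip_apply_of_not_same (fun h' => h ((sameCycle_flip_self x y σ).1 h')),
      flip_apply_of_not_same h]

variable {D : Type*} [Ring D]

theorem cyc_flip_of_not_same (B : Matrix (Fin n) (Fin n) D) {x y : Fin n} {σ : Perm (Fin n)}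
    (h : ¬ σ.SameCycle x y) : cyc B (flipCycle x σ) y = cyc B σ y :=
  cyc_agree B (flip_iterate_of_not_same h)

variable [StarRing D]

/-- For Hermitian `B`, conjugation reverses the direction of a walk. -/
theorem star_walk (B : Matrix (Fin n) (Fin n) D) (hB : ∀ i j, star (B i j) = B j i)
    (σ : Perm (Fin n)) (m : ℕ) (x : Fin n) :
    star (walk B σ m x) = walk B (σ⁻¹ : Perm (Fin n)) m (σ^[m] x) := by
  induction m generalizing x with
  | zero => simp [walk]
  | succ m ih =>
    have hm : (σ⁻¹ : Perm (Fin n))^[m] (σ^[m] (σ x)) = σ x :=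
      (LeftInverse.iterate (f := σ) (g := (σ⁻¹ : Perm (Fin n))) (fun y => by simp) m) (σ x)
    rw [walk, star_mul, ih, hB, walk_add, Function.iterate_succ_apply, hm]
    simp [walk]

/-- For Hermitian `B`, reversing a cycle conjugates its product. -/
theorem cyc_flip_self (B : Matrix (Fin n) (Fin n) D) (hB : ∀ i j, star (B i j) = B j i)
    (σ : Perm (Fin n)) (x : Fin n) : cyc B (flipCycle x σ) x = star (cyc B σ x) := by
  rw [cyc_agree B (flip_iterate_self x σ), cyc, cyc, star_walk B hB, iterate_minimalPeriod]
  congr 1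
  rw [minimalPeriod_eq_minimalPeriod_iff]
  intro t
  rw [IsPeriodicPt, IsPeriodicPt, IsFixedPt, IsFixedPt, Perm.iterate_eq_pow, Perm.iterate_eq_pow,
    inv_pow, Perm.inv_eq_iff_eq, eq_comm]

end Flip

/-! ### Merging two cycles by a transposition -/

section Swap

open Function Equiv

variable {n : ℕ}

theorem iterate_agree_lt {f g : Fin n → Fin n} {x : Fin n} {t : ℕ}
    (h : ∀ s < t, f (g^[s] x) = g (g^[s] x)) : f^[t] x = g^[t] x := by
  induction t with
  | zero => rfl
  | succ t ih =>
    rw [Function.iterate_succ_apply', Function.iterate_succ_apply',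
      ih fun s hs => h s (by omega), h t (by omega)]

theorem mul_swap_apply_of_ne {σ : Perm (Fin n)} {i k y : Fin n} (h1 : y ≠ i) (h2 : y ≠ k) :
    (σ * swap i k) y = σ y := by
  rw [Perm.mul_apply, swap_apply_of_ne_of_ne h1 h2]

/-- If `i` and `k` lie in different cycles of `τ`, then `τ * swap i k` first carries `k` along the
whole `τ`-cycle of `i`. -/
theorem mul_swap_iterate {τ : Perm (Fin n)} {i k : Fin n} (h : ¬ τ.SameCycle i k) {t : ℕ}
    (ht0 : 0 < t) (ht : t ≤ minimalPeriod τ i) : (τ * swap i k)^[t] k = τ^[t] i := by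
  obtain ⟨t, rfl⟩ := Nat.exists_eq_add_of_lt ht0
  simp only [zero_add, Function.iterate_succ_apply] at ht ⊢
  have hk : (τ * swap i k) k = τ i := by simp
  rw [hk]
  refine iterate_agree_lt fun s hs => mul_swap_apply_of_ne ?_ ?_
  · rw [← Function.iterate_succ_apply]
    exact not_isPeriodicPt_of_pos_of_lt_minimalPeriod (by omega) (by omega)
  · intro hs'
    rw [← Function.iterate_succ_apply] at hs'
    exact h (sameCycle_iff_iterate.2 ⟨_, hs'⟩)

theorem mul_swap_iterate' {τ : Perm (Fin n)} {i k : Fin n} (h : ¬ τ.SameCycle i k) {t : ℕ}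
    (ht0 : 0 < t) (ht : t ≤ minimalPeriod τ k) : (τ * swap i k)^[t] i = τ^[t] k := by
  rw [Equiv.swap_comm]
  exact mul_swap_iterate (fun h' => h h'.symm) ht0 ht

theorem mul_swap_iterate_period {τ : Perm (Fin n)} {i k : Fin n} (h : ¬ τ.SameCycle i k) :
    (τ * swap i k)^[minimalPeriod τ i] k = i := by
  rw [mul_swap_iterate h (per_pos τ i) le_rfl, iterate_minimalPeriod]

/-- After the `τ`-cycle of `i`, the permutation `τ * swap i k` carries `k` along its own `τ`-cycle. -/
theorem mul_swap_iterate_add {τ : Perm (Fin n)} {i k : Fin n} (h : ¬ τ.SameCycle i k) {t : ℕ}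
    (ht0 : 0 < t) (ht : t ≤ minimalPeriod τ k) :
    (τ * swap i k)^[t + minimalPeriod τ i] k = τ^[t] k := by
  rw [Function.iterate_add_apply, mul_swap_iterate_period h, mul_swap_iterate' h ht0 ht]

theorem minimalPeriod_mul_swap {τ : Perm (Fin n)} {i k : Fin n} (h : ¬ τ.SameCycle i k) :
    minimalPeriod (τ * swap i k) k = minimalPeriod τ k + minimalPeriod τ i := by
  apply le_antisymm
  · refine IsPeriodicPt.minimalPeriod_le (by have := per_pos τ i; omega) ?_
    rw [IsPeriodicPt, IsFixedPt, mul_swap_iterate_add h (per_pos τ k) le_rfl,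
      iterate_minimalPeriod]
  · by_contra! hlt
    have hp := iterate_minimalPeriod (f := (τ * swap i k)) (x := k)
    have hpos := per_pos (τ * swap i k) k
    rcases le_or_gt (minimalPeriod (τ * swap i k) k) (minimalPeriod τ i) with hle | hgt
    · rw [mul_swap_iterate h hpos hle] at hp
      exact h (sameCycle_iff_iterate.2 ⟨_, hp⟩)
    · obtain ⟨s, hs⟩ := Nat.exists_eq_add_of_lt hgt
      rw [hs, add_assoc, add_comm, mul_swap_iterate_add h (by omega) (by omega)] at hp
      exact not_isPeriodicPt_of_pos_of_lt_minimalPeriod (f := τ) (n := s + 1) (by omega)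
        (by omega) hp

theorem sameCycle_mul_swap {τ : Perm (Fin n)} {i k : Fin n} (h : ¬ τ.SameCycle i k)
    (y : Fin n) : (τ * swap i k).SameCycle k y ↔ τ.SameCycle k y ∨ τ.SameCycle i y := by
  have hik : (τ * swap i k).SameCycle k i :=
    sameCycle_iff_iterate.2 ⟨_, mul_swap_iterate_period h⟩
  constructor
  · intro hy
    by_contra! hn
    have : ∀ t : ℕ, (τ * swap i k)^[t] y = τ^[t] y := iterate_agree fun z hz => by
      refine mul_swap_apply_of_ne ?_ ?_
      · rintro rfl
        exact hn.2 hz.symm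
      · rintro rfl
        exact hn.1 hz.symm
    exact hn.1 ((sameCycle_agree this k).1 hy.symm).symm
  · rintro (hy | hy)
    · obtain ⟨t, rfl⟩ := sameCycle_iff_iterate.1 hy
      rw [← iterate_mod_minimalPeriod_eq]
      rcases Nat.eq_zero_or_pos (t % minimalPeriod τ k) with h0 | h0
      · rw [h0]
        exact Perm.SameCycle.refl _ _
      · rw [← mul_swap_iterate' h h0 (Nat.mod_lt _ (per_pos τ k)).le]
        exact hik.trans (sameCycle_iterate _ _ _)
    · obtain ⟨t, rfl⟩ := sameCycle_iff_iterate.1 hy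
      rw [← iterate_mod_minimalPeriod_eq]
      rcases Nat.eq_zero_or_pos (t % minimalPeriod τ i) with h0 | h0
      · rw [h0]
        exact hik
      · rw [← mul_swap_iterate h h0 (Nat.mod_lt _ (per_pos τ i)).le]
        exact sameCycle_iterate _ _ _

theorem mul_swap_iterate_of_not_same {τ : Perm (Fin n)} {i k y : Fin n}
    (hk : ¬ τ.SameCycle k y) (hi : ¬ τ.SameCycle i y) (t : ℕ) :
    (τ * swap i k)^[t] y = τ^[t] y :=
  iterate_agree (fun z hz => by
    refine mul_swap_apply_of_ne ?_ ?_
    · rintro rfl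
      exact hi hz.symm
    · rintro rfl
      exact hk hz.symm) t

/-- Conversely to `sameCycle_mul_swap`, composing with `swap i k` separates `i` and `k` when they
share a cycle. -/
theorem not_sameCycle_mul_swap {σ : Perm (Fin n)} {i k : Fin n} (hne : i ≠ k)
    (h : σ.SameCycle i k) : ¬ (σ * swap i k).SameCycle i k := by
  classical
  -- `d` is the distance from `k` to `i` along the cycle; it becomes a period of `i`.
  have hex : ∃ d, σ^[d] k = i := sameCycle_iff_iterate.1 h.symm
  set d := Nat.find hex with hd
  have hdi : σ^[d] k = i := Nat.find_spec hex
  have hmin : ∀ s < d, σ^[s] k ≠ i := fun s hs => Nat.find_min hex hs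
  have hd0 : 0 < d := by
    rcases Nat.eq_zero_or_pos d with h0 | h0
    · rw [h0] at hdi
      exact absurd hdi.symm hne
    · exact h0
  have hnk : ∀ s, 0 < s → s < d → σ^[s] k ≠ k := by
    intro s hs0 hs hsk
    refine hmin (d - s) (by omega) ?_
    rw [← hdi]
    conv_rhs => rw [show d = (d - s) + s by omega, Function.iterate_add_apply, hsk]
  have key : ∀ t, 0 < t → t ≤ d → (σ * swap i k)^[t] i = σ^[t] k := by
    intro t ht0 ht
    obtain ⟨t, rfl⟩ := Nat.exists_eq_add_of_lt ht0
    simp only [zero_add, Function.iterate_succ_apply] at ht ⊢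
    have hk : (σ * swap i k) i = σ k := by simp
    rw [hk]
    refine iterate_agree_lt fun s hs => mul_swap_apply_of_ne ?_ ?_
    · rw [← Function.iterate_succ_apply]
      exact hmin _ (by omega)
    · rw [← Function.iterate_succ_apply]
      exact hnk _ (by omega) (by omega)
  have hper : IsPeriodicPt (σ * swap i k) d i := by
    rw [IsPeriodicPt, IsFixedPt, key d hd0 le_rfl, hdi]
  intro hsame
  obtain ⟨t, ht⟩ := sameCycle_iff_iterate.1 hsame
  rw [← hper.iterate_mod_apply] at ht
  rcases Nat.eq_zero_or_pos (t % d) with h0 | h0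
  · rw [h0] at ht
    exact hne ht
  · have hlt := Nat.mod_lt t hd0
    rw [key _ h0 hlt.le] at ht
    exact hnk _ h0 hlt ht

variable {D : Type*} [Ring D]

/-- The product along the cycle of `σ` through `k` with its first factor `B k (σ k)` replaced by
`B i (σ k)`. These are the products occurring in the entry `(i, k)` of `B * mooreAdj B`. -/
def spliced (B : Matrix (Fin n) (Fin n) D) (σ : Perm (Fin n)) (i k : Fin n) : D :=
  B i (σ k) * walk B σ (minimalPeriod σ k - 1) (σ k)

theorem spliced_self (B : Matrix (Fin n) (Fin n) D) (σ : Perm (Fin n)) (k : Fin n) :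
    spliced B σ k k = cyc B σ k := (cyc_eq_mul B σ k).symm

theorem spliced_agree (B : Matrix (Fin n) (Fin n) D) {σ τ : Perm (Fin n)} (i : Fin n)
    {k : Fin n} (h : ∀ t : ℕ, τ^[t] k = σ^[t] k) : spliced B τ i k = spliced B σ i k := by
  have hp : minimalPeriod τ k = minimalPeriod σ k := by
    rw [minimalPeriod_eq_minimalPeriod_iff]
    intro t
    rw [IsPeriodicPt, IsPeriodicPt, IsFixedPt, IsFixedPt, h]
  have h1 : τ k = σ k := h 1
  rw [spliced, spliced, hp, h1, walk_congr B]
  intro t _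
  have := h (t + 1)
  rwa [Function.iterate_succ_apply, Function.iterate_succ_apply, h1] at this

/-- Merging the cycles of `i` and `k` multiplies the spliced product by the cycle product at `i`;
this matches the terms that cancel in an off-diagonal entry of `B * mooreAdj B`. -/
theorem spliced_mul_swap (B : Matrix (Fin n) (Fin n) D) {τ : Perm (Fin n)} {i k : Fin n}
    (h : ¬ τ.SameCycle i k) :
    spliced B (τ * swap i k) i k = cyc B τ i * spliced B τ i k := by
  have hi := per_pos τ i
  have hk := per_pos τ k
  have hσk : (τ * swap i k) k = τ i := by simp
  have hσi : (τ * swap i k) i = τ k := by simp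
  have hw1 : walk B (τ * swap i k : Perm (Fin n)) (minimalPeriod τ i - 1) (τ i) =
      walk B τ (minimalPeriod τ i - 1) (τ i) := by
    refine walk_congr B fun t ht => ?_
    have := mul_swap_iterate h (t := t + 1) (by omega) (by omega)
    rwa [Function.iterate_succ_apply, Function.iterate_succ_apply, hσk] at this
  have hw2 : walk B (τ * swap i k : Perm (Fin n)) (minimalPeriod τ k - 1) (τ k) =
      walk B τ (minimalPeriod τ k - 1) (τ k) := by
    refine walk_congr B fun t ht => ?_
    have := mul_swap_iterate' h (t := t + 1) (by omega) (by omega)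
    rwa [Function.iterate_succ_apply, Function.iterate_succ_apply, hσi] at this
  have hend : (τ * swap i k)^[minimalPeriod τ i - 1] (τ i) = i := by
    have := mul_swap_iterate_period h
    conv at this => lhs; rw [show minimalPeriod τ i = minimalPeriod τ i - 1 + 1 by omega,
      Function.iterate_succ_apply, hσk]
    exact this
  have hlen : minimalPeriod (τ * swap i k) k - 1 =
      (minimalPeriod τ i - 1) + ((minimalPeriod τ k - 1) + 1) := by
    rw [minimalPeriod_mul_swap h]
    omega
  rw [spliced, hlen, walk_add, hσk, hend, hw1, walk, hσi, hw2, cyc_eq_mul, spliced]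
  simp only [mul_assoc]

end Swap

/-! ### The adjugate identity for Hermitian quaternion matrices -/

section Adjugate

open Function Equiv

variable {n : ℕ} {K : Type*} [CommRing K]

theorem re_mul_comm (a b : ℍ[K]) : (a * b).re = (b * a).re := by
  simp only [Quaternion.re_mul]
  ring

theorem coe_two : ((2 : K) : ℍ[K]) = 2 := by
  rw [← one_add_one_eq_two, Quaternion.coe_add, Quaternion.coe_one, one_add_one_eq_two]

theorem coe_finset_sum {α : Type*} (s : Finset α) (f : α → K) :
    ((∑ a ∈ s, f a : K) : ℍ[K]) = ∑ a ∈ s, ((f a : K) : ℍ[K]) :=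
  map_sum (algebraMap K ℍ[K]) f s

theorem add_star_eq (a : ℍ[K]) : a + star a = 2 * ((a.re : K) : ℍ[K]) := by
  rw [Quaternion.self_add_star']
  push_cast
  rfl

theorem two_mul_cancel [Algebra ℚ K] {a b : ℍ[K]} (h : 2 * a = 2 * b) : a = b := by
  have hu : (algebraMap ℚ K (1 / 2)) * 2 = 1 := by
    rw [← map_ofNat (algebraMap ℚ K) 2, ← map_mul]
    norm_num
  have hu' : (((algebraMap ℚ K (1 / 2)) : K) : ℍ[K]) * 2 = 1 := by
    rw [← coe_two, ← Quaternion.coe_mul, hu, Quaternion.coe_one]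
  calc a = _ * 2 * a := by rw [hu', one_mul]
    _ = _ := by rw [mul_assoc, h, ← mul_assoc, hu', one_mul]

/-- If an involution conjugates `f` and fixes `r`, then `f` may be replaced by its real part in the
sum of `f * r`. -/
theorem sum_average [Algebra ℚ K] {α : Type*} (s : Finset α) (φ : α → α)
    (hφ : ∀ a ∈ s, φ a ∈ s) (hφφ : ∀ a, φ (φ a) = a) (f r : α → ℍ[K])
    (hf : ∀ a ∈ s, f (φ a) = star (f a)) (hr : ∀ a ∈ s, r (φ a) = r a) :
    ∑ a ∈ s, f a * r a = ∑ a ∈ s, (((f a).re : K) : ℍ[K]) * r a := by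
  have h1 : ∑ a ∈ s, f a * r a = ∑ a ∈ s, star (f a) * r a := by
    refine Finset.sum_nbij' φ φ hφ hφ (fun a _ => hφφ a) (fun a _ => hφφ a) fun a ha => ?_
    rw [hf a ha, hr a ha, star_star]
  apply two_mul_cancel
  calc 2 * ∑ a ∈ s, f a * r a = ∑ a ∈ s, f a * r a + ∑ a ∈ s, star (f a) * r a := by
        rw [← h1, two_mul]
    _ = _ := by
        rw [← Finset.sum_add_distrib, Finset.mul_sum]
        refine Finset.sum_congr rfl fun a _ => ?_
        rw [← add_mul, add_star_eq, mul_assoc]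

instance (σ : Perm (Fin n)) : DecidablePred (IsLeader σ) := fun x =>
  inferInstanceAs (Decidable (∀ y, σ.SameCycle x y → x ≤ y))

theorem re_cyc_eq_of_sameCycle (B : Matrix (Fin n) (Fin n) ℍ[K]) {σ : Perm (Fin n)}
    {x y : Fin n} (h : σ.SameCycle x y) : (cyc B σ y).re = (cyc B σ x).re := by
  obtain ⟨t, rfl⟩ := sameCycle_iff_iterate.1 h
  clear h
  induction t with
  | zero => rfl
  | succ t ih =>
    rw [Function.iterate_succ_apply', cyc_apply, re_mul_comm, ← cyc_eq_mul, ih]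

/-- Separates the factor of the cycle through `i` from a product over cycles. -/
theorem prod_leaders_split (B : Matrix (Fin n) (Fin n) ℍ[K]) (σ : Perm (Fin n)) (i : Fin n)
    (P : Fin n → Prop) [DecidablePred P] (hP : ∀ x, σ.SameCycle i x → P x) :
    ∏ x with IsLeader σ x ∧ P x, (cyc B σ x).re =
      (cyc B σ i).re * ∏ x with IsLeader σ x ∧ P x ∧ ¬ σ.SameCycle i x, (cyc B σ x).re := by
  obtain ⟨y, hy, hly, huniq⟩ := exists_unique_leader σ i
  have hset : (Finset.univ.filter fun x => IsLeader σ x ∧ P x) =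
      insert y (Finset.univ.filter fun x => IsLeader σ x ∧ P x ∧ ¬ σ.SameCycle i x) := by
    ext x
    simp only [Finset.mem_filter, Finset.mem_univ, true_and, Finset.mem_insert]
    constructor
    · rintro ⟨hl, hp⟩
      by_cases hx : σ.SameCycle i x
      · exact Or.inl (huniq x hx hl)
      · exact Or.inr ⟨hl, hp, hx⟩
    · rintro (rfl | ⟨hl, hp, -⟩)
      · exact ⟨hly, hP _ hy⟩
      · exact ⟨hl, hp⟩
  rw [hset, Finset.prod_insert (by simp [hy]), re_cyc_eq_of_sameCycle B hy]

/-- The sign of `σ` as an element of `K`. -/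
def sgn (K : Type*) [CommRing K] (σ : Perm (Fin n)) : K := ((Perm.sign σ : ℤ) : K)

/-- The Moore determinant with every cycle product replaced by its real part. It is a scalar, and
neither the starting points nor the order of the cycles matter. -/
def realMoore (B : Matrix (Fin n) (Fin n) ℍ[K]) : K :=
  ∑ σ : Perm (Fin n), sgn K σ * ∏ x with IsLeader σ x, (cyc B σ x).re

/-- The product of the real parts of the cycle products over all cycles avoiding `k`. -/
def rest (B : Matrix (Fin n) (Fin n) ℍ[K]) (σ : Perm (Fin n)) (k : Fin n) : K :=
  ∏ x with IsLeader σ x ∧ ¬ σ.SameCycle k x, (cyc B σ x).re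

/-- The adjugate of `B` for the Moore determinant: the entry `(j, k)` sums, over permutations with
`σ k = j`, the signed product along the cycle from `j` to `k` without the factor `B k j`, times the
real parts of the other cycles. -/
def mooreAdj (B : Matrix (Fin n) (Fin n) ℍ[K]) : Matrix (Fin n) (Fin n) ℍ[K] :=
  Matrix.of fun j k => ∑ σ : Perm (Fin n) with σ k = j,
    walk B σ (minimalPeriod σ k - 1) j * ((sgn K σ * rest B σ k : K) : ℍ[K])

theorem mul_mooreAdj_apply (B : Matrix (Fin n) (Fin n) ℍ[K]) (i k : Fin n) :
    (B * mooreAdj B) i k =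
      ∑ σ : Perm (Fin n), spliced B σ i k * ((sgn K σ * rest B σ k : K) : ℍ[K]) := by
  rw [Matrix.mul_apply,
    ← Finset.sum_fiberwise (s := Finset.univ) (g := fun σ : Perm (Fin n) => σ k)]
  refine Finset.sum_congr rfl fun j _ => ?_
  rw [mooreAdj, Matrix.of_apply, Finset.mul_sum]
  refine Finset.sum_congr rfl fun σ hσ => ?_
  simp only [Finset.mem_filter, Finset.mem_univ, true_and] at hσ
  rw [spliced, hσ, mul_assoc]

theorem sgn_flipCycle (x : Fin n) (σ : Perm (Fin n)) : sgn K (flipCycle x σ) = sgn K σ := by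
  rw [sgn, sign_flip, sgn]

theorem rest_flipCycle (B : Matrix (Fin n) (Fin n) ℍ[K]) (σ : Perm (Fin n)) (k : Fin n) :
    rest B (flipCycle k σ) k = rest B σ k := by
  simp only [rest, isLeader_flip, sameCycle_flip]
  refine Finset.prod_congr rfl fun x hx => ?_
  simp only [Finset.mem_filter, Finset.mem_univ, true_and] at hx
  rw [cyc_flip_of_not_same B hx.2]

theorem sgn_mul_swap (τ : Perm (Fin n)) {i k : Fin n} (h : i ≠ k) :
    sgn K (τ * swap i k) = - sgn K τ := by
  simp [sgn, Perm.sign_swap h]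

variable [Algebra ℚ K]

theorem mul_mooreAdj_diag (B : Matrix (Fin n) (Fin n) ℍ[K])
    (hB : ∀ i j, star (B i j) = B j i) (k : Fin n) :
    (B * mooreAdj B) k k = ((realMoore B : K) : ℍ[K]) := by
  rw [mul_mooreAdj_apply]
  simp only [spliced_self]
  rw [sum_average Finset.univ (flipCycle k) (by simp) (flip_flip k) _ _
    (fun σ _ => cyc_flip_self B hB σ k)
    (fun σ _ => by rw [sgn_flipCycle, rest_flipCycle])]
  simp only [← Quaternion.coe_mul]
  rw [realMoore, coe_finset_sum]
  refine Finset.sum_congr rfl fun σ _ => ?_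
  have h := prod_leaders_split B σ k (fun _ => True) (by simp)
  simp only [and_true, true_and] at h
  rw [h, rest]
  congr 1
  ring

theorem mul_mooreAdj_offDiag (B : Matrix (Fin n) (Fin n) ℍ[K])
    (hB : ∀ i j, star (B i j) = B j i) {i k : Fin n} (hik : i ≠ k) :
    (B * mooreAdj B) i k = 0 := by
  rw [mul_mooreAdj_apply,
    ← Finset.sum_filter_add_sum_filter_not _ (fun σ : Perm (Fin n) => σ.SameCycle i k)]
  set rest₂ : Perm (Fin n) → K := fun τ =>
    ∏ x with IsLeader τ x ∧ ¬ τ.SameCycle k x ∧ ¬ τ.SameCycle i x, (cyc B τ x).re with hrest₂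
  -- The permutations with `i` and `k` in a common cycle are the `τ * swap i k` with `i` and `k` in
  -- different cycles of `τ`.
  have h1 : ∑ σ : Perm (Fin n) with σ.SameCycle i k,
        spliced B σ i k * ((sgn K σ * rest B σ k : K) : ℍ[K]) =
      ∑ τ : Perm (Fin n) with ¬ τ.SameCycle i k,
        cyc B τ i * (spliced B τ i k * ((-(sgn K τ * rest₂ τ) : K) : ℍ[K])) := by
    symm
    refine Finset.sum_nbij' (fun τ => τ * swap i k) (fun σ => σ * swap i k) ?_ ?_ ?_ ?_ ?_
    · intro τ hτ
      simp only [Finset.mem_filter, Finset.mem_univ, true_and] at hτ ⊢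
      exact ((sameCycle_mul_swap hτ i).2 (Or.inr (Perm.SameCycle.refl _ _))).symm
    · intro σ hσ
      simp only [Finset.mem_filter, Finset.mem_univ, true_and] at hσ ⊢
      exact not_sameCycle_mul_swap hik hσ
    · intro τ _
      simp [mul_assoc]
    · intro τ _
      simp [mul_assoc]
    · intro τ hτ
      simp only [Finset.mem_filter, Finset.mem_univ, true_and] at hτ
      have hr : rest B (τ * swap i k) k = rest₂ τ := by
        simp only [rest, sameCycle_mul_swap hτ, not_or, hrest₂]
        refine Finset.prod_congr ?_ ?_
        · ext x
          simp only [Finset.mem_filter, Finset.mem_univ, true_and]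
          refine and_congr_left fun hx => ?_
          exact isLeader_agree (mul_swap_iterate_of_not_same hx.1 hx.2)
        · intro x hx
          simp only [Finset.mem_filter, Finset.mem_univ, true_and] at hx
          rw [cyc_agree B (mul_swap_iterate_of_not_same hx.2.1 hx.2.2)]
      rw [spliced_mul_swap B hτ, sgn_mul_swap τ hik, hr, neg_mul, mul_assoc]
  -- Once the cycle product at `i` is averaged to its real part, the terms cancel one by one.
  have h2 : ∀ τ ∈ Finset.univ.filter (fun τ : Perm (Fin n) => ¬ τ.SameCycle i k),
      (((cyc B τ i).re : K) : ℍ[K]) *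
        (spliced B τ i k * ((-(sgn K τ * rest₂ τ) : K) : ℍ[K])) =
      - (spliced B τ i k * ((sgn K τ * rest B τ k : K) : ℍ[K])) := by
    intro τ hτ
    simp only [Finset.mem_filter, Finset.mem_univ, true_and] at hτ
    have h := prod_leaders_split B τ i (fun x => ¬ τ.SameCycle k x)
      (fun x hx hx' => hτ (hx.trans hx'.symm))
    rw [rest, h, Quaternion.coe_commutes, mul_assoc, ← Quaternion.coe_mul,
      ← mul_neg (spliced B τ i k), ← Quaternion.coe_neg]
    congr 2
    rw [hrest₂]
    ring
  rw [h1, sum_average _ (flipCycle i) _ (flip_flip i) _ _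
    (fun σ _ => cyc_flip_self B hB σ i), Finset.sum_congr rfl h2, Finset.sum_neg_distrib,
    neg_add_cancel]
  · intro τ hτ
    simp only [Finset.mem_filter, Finset.mem_univ, true_and] at hτ
    rw [sgn_flipCycle, spliced_agree B i (flip_iterate_of_not_same hτ)]
    congr 4
    simp only [hrest₂, isLeader_flip, sameCycle_flip]
    refine Finset.prod_congr rfl fun x hx => ?_
    simp only [Finset.mem_filter, Finset.mem_univ, true_and] at hx
    rw [cyc_flip_of_not_same B hx.2.2]
  · intro τ hτ
    simp only [Finset.mem_filter, Finset.mem_univ, true_and] at hτ ⊢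
    rwa [sameCycle_flip]

theorem mul_mooreAdj (B : Matrix (Fin n) (Fin n) ℍ[K]) (hB : ∀ i j, star (B i j) = B j i) :
    B * mooreAdj B = Matrix.diagonal fun _ => ((realMoore B : K) : ℍ[K]) := by
  ext1 i k
  by_cases h : i = k
  · subst h
    rw [mul_mooreAdj_diag B hB, Matrix.diagonal_apply_eq]
  · rw [mul_mooreAdj_offDiag B hB h, Matrix.diagonal_apply_ne _ h]

end Adjugate

/-! ### The Moore determinant of a Hermitian matrix is `realMoore` -/

section MooreSum

open Function Equiv

variable {n : ℕ}

theorem cycleList_eq (σ : Perm (Fin n)) (x : Fin n) :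
    cycleList σ x = (List.range (minimalPeriod σ x)).map fun t => σ^[t] x := by
  obtain ⟨m, hm⟩ := Nat.exists_eq_add_of_lt (per_pos σ x)
  rw [zero_add] at hm
  have hle : m + 1 ≤ n := by
    rw [← hm]
    simpa using minimalPeriod_le_card (f := σ) (x := x)
  obtain ⟨r, hr⟩ := Nat.exists_eq_add_of_le hle
  have hrange : List.range n =
      List.range m ++ (m :: (List.range r).map fun t => m + (t + 1)) := by
    rw [hr, show m + 1 + r = m + (r + 1) by omega, List.range_add, List.range_succ_eq_map]
    simp [comp_def]
  have hx : (σ ^ (m + 1)) x = x := by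
    rw [← Perm.iterate_eq_pow, ← hm, iterate_minimalPeriod]
  rw [cycleList, hrange, List.map_append, List.takeWhile_append_of_pos, List.map_cons,
    List.takeWhile_cons_of_neg (by simp [hx]), List.append_nil, hm, List.range_succ_eq_map]
  · simp only [List.map_cons, List.map_map, iterate_zero, id]
    congr 1
  · intro y hy
    obtain ⟨t, ht, rfl⟩ := List.mem_map.1 hy
    rw [List.mem_range] at ht
    rw [← Perm.iterate_eq_pow]
    exact decide_eq_true (not_isPeriodicPt_of_pos_of_lt_minimalPeriod (f := σ) (x := x)
      (n := t + 1) (by omega) (by omega))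

theorem mem_cycleList {σ : Perm (Fin n)} {x y : Fin n} :
    y ∈ cycleList σ x ↔ σ.SameCycle x y := by
  rw [cycleList_eq, List.mem_map, sameCycle_iff_iterate]
  constructor
  · rintro ⟨t, -, rfl⟩
    exact ⟨t, rfl⟩
  · rintro ⟨t, rfl⟩
    exact ⟨t % minimalPeriod σ x, List.mem_range.2 (Nat.mod_lt _ (per_pos σ x)),
      iterate_mod_minimalPeriod_eq⟩

theorem prod_map_range_eq_walk {D : Type*} [Ring D] (B : Matrix (Fin n) (Fin n) D)
    (f : Fin n → Fin n) (m : ℕ) (x : Fin n) :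
    ((List.range m).map fun t => B (f^[t] x) (f (f^[t] x))).prod = walk B f m x := by
  induction m generalizing x with
  | zero => rfl
  | succ m ih =>
    rw [List.range_succ_eq_map, walk, ← ih]
    simp [comp_def]

theorem prod_cycleList {D : Type*} [Ring D] (B : Matrix (Fin n) (Fin n) D)
    (σ : Perm (Fin n)) (x : Fin n) :
    ((cycleList σ x).map fun i => B i (σ i)).prod = cyc B σ x := by
  rw [cycleList_eq, List.map_map, cyc, ← prod_map_range_eq_walk]
  rfl

theorem prod_map_filter_eq {M α : Type*} [Monoid M] (p : α → Prop) [DecidablePred p]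
    (f : α → M) (l : List α) :
    ((l.filter fun a => decide (p a)).map f).prod =
      (l.map fun a => if p a then f a else 1).prod := by
  induction l with
  | nil => rfl
  | cons a l ih =>
    by_cases h : p a <;> simp [h, ih]

/-- The cycle product at `x` if `x` leads its cycle, and `1` otherwise. -/
def leadCyc {D : Type*} [Ring D] (B : Matrix (Fin n) (Fin n) D) (σ : Perm (Fin n))
    (x : Fin n) : D :=
  if IsLeader σ x then cyc B σ x else 1

theorem prod_mooreOrder {D : Type*} [Ring D] (B : Matrix (Fin n) (Fin n) D)
    (σ : Perm (Fin n)) :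
    ((mooreOrder σ).map fun i => B i (σ i)).prod =
      ((List.finRange n).reverse.map (leadCyc B σ)).prod := by
  have hl : mooreLeaders σ =
      (List.finRange n).reverse.filter fun x => decide (IsLeader σ x) := by
    rw [mooreLeaders, ← List.filter_reverse]
    refine List.filter_congr fun x _ => ?_
    rw [Bool.eq_iff_iff]
    rw [List.all_eq_true, decide_eq_true_iff]
    simp only [mem_cycleList, IsLeader, decide_eq_true_iff]
  rw [mooreOrder, List.map_flatten, List.prod_flatten, List.map_map, List.map_map, hl]
  have : (List.prod ∘ List.map fun i => B i (σ i)) ∘ cycleList σ = cyc B σ := by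
    funext x
    exact prod_cycleList B σ x
  rw [this, prod_map_filter_eq]
  rfl

/-- Reverses the cycle of `σ` through `x` if `x` leads it. -/
def flipLeader (x : Fin n) (σ : Perm (Fin n)) : Perm (Fin n) :=
  if IsLeader σ x then flipCycle x σ else σ

theorem isLeader_flipLeader (x y : Fin n) (σ : Perm (Fin n)) :
    IsLeader (flipLeader x σ) y ↔ IsLeader σ y := by
  rw [flipLeader]
  split_ifs
  · exact isLeader_flip x y σ
  · rfl

theorem flipLeader_flipLeader (x : Fin n) (σ : Perm (Fin n)) :
    flipLeader x (flipLeader x σ) = σ := by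
  by_cases h : IsLeader σ x
  · have h' := (isLeader_flip x x σ).2 h
    simp only [flipLeader, h, h', if_true, flip_flip]
  · simp only [flipLeader, h, if_false]

variable {K : Type*} [CommRing K]

theorem sgn_flipLeader (x : Fin n) (σ : Perm (Fin n)) : sgn K (flipLeader x σ) = sgn K σ := by
  rw [flipLeader]
  split_ifs
  · exact sgn_flipCycle x σ
  · rfl

theorem leadCyc_flipLeader_self (B : Matrix (Fin n) (Fin n) ℍ[K])
    (hB : ∀ i j, star (B i j) = B j i) (x : Fin n) (σ : Perm (Fin n)) :
    leadCyc B (flipLeader x σ) x = star (leadCyc B σ x) := by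
  by_cases h : IsLeader σ x
  · have h' := (isLeader_flip x x σ).2 h
    simp only [leadCyc, flipLeader, h, h', if_true, cyc_flip_self B hB]
  · simp only [leadCyc, flipLeader, h, if_false, star_one]

theorem leadCyc_flipLeader_of_ne (B : Matrix (Fin n) (Fin n) ℍ[K]) {x y : Fin n} (hxy : y ≠ x)
    (σ : Perm (Fin n)) : leadCyc B (flipLeader x σ) y = leadCyc B σ y := by
  by_cases hy : IsLeader σ y
  · rw [leadCyc, leadCyc, if_pos hy, if_pos ((isLeader_flipLeader x y σ).2 hy), flipLeader]
    split_ifs with hx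
    · refine cyc_flip_of_not_same B fun h => hxy ?_
      exact le_antisymm (hy x h.symm) (hx y h)
    · rfl
  · rw [leadCyc, leadCyc, if_neg hy, if_neg (mt (isLeader_flipLeader x y σ).1 hy)]

variable [Algebra ℚ K]

/-- Averages away the imaginary parts of the cycle products one index of `L` at a time; the weight
`c` collects the real parts already extracted. -/
theorem sum_prod_leadCyc (B : Matrix (Fin n) (Fin n) ℍ[K]) (hB : ∀ i j, star (B i j) = B j i)
    (L : List (Fin n)) (hL : L.Nodup) (c : Perm (Fin n) → K)
    (hc : ∀ x ∈ L, ∀ σ, c (flipLeader x σ) = c σ) :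
    ∑ σ : Perm (Fin n), (L.map (leadCyc B σ)).prod * ((c σ : K) : ℍ[K]) =
      ((∑ σ : Perm (Fin n), (L.map fun x => (leadCyc B σ x).re).prod * c σ : K) : ℍ[K]) := by
  induction L generalizing c with
  | nil => simp [coe_finset_sum]
  | cons x L ih =>
    rw [List.nodup_cons] at hL
    have hne : ∀ y ∈ L, y ≠ x := fun y hy h => hL.1 (h ▸ hy)
    simp only [List.map_cons, List.prod_cons, mul_assoc]
    rw [sum_average Finset.univ (flipLeader x) (by simp) (flipLeader_flipLeader x) _ _
      (fun σ _ => leadCyc_flipLeader_self B hB x σ)]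
    · have := ih hL.2 (fun σ => (leadCyc B σ x).re * c σ) (fun y hy σ => by
        rw [hc y (List.mem_cons_of_mem x hy),
          leadCyc_flipLeader_of_ne B (fun h => hne y hy h.symm)])
      convert this using 1
      · refine Finset.sum_congr rfl fun σ _ => ?_
        rw [← mul_assoc, Quaternion.coe_commutes, mul_assoc, Quaternion.coe_mul]
      · congr 1
        refine Finset.sum_congr rfl fun σ _ => ?_
        ring
    · intro σ _
      rw [hc x List.mem_cons_self]
      congr 2
      exact List.map_congr_left fun y hy => leadCyc_flipLeader_of_ne B (hne y hy) σ

theorem Mdet_eq_realMoore (B : Matrix (Fin n) (Fin n) ℍ[K])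
    (hB : ∀ i j, star (B i j) = B j i) : Mdet B = ((realMoore B : K) : ℍ[K]) := by
  have hs : ∀ σ : Perm (Fin n), ((Perm.sign σ : ℤ) : ℍ[K]) = ((sgn K σ : K) : ℍ[K]) := by
    intro σ
    rw [sgn]
    exact (map_intCast (algebraMap K ℍ[K]) _).symm
  have := sum_prod_leadCyc B hB (List.finRange n).reverse
    (List.nodup_reverse.2 (List.nodup_finRange n)) (sgn K) (fun x _ σ => sgn_flipLeader x σ)
  rw [Mdet]
  simp only [hs, prod_mooreOrder, Quaternion.coe_commutes, this]
  congr 1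
  rw [realMoore]
  refine Finset.sum_congr rfl fun σ _ => ?_
  rw [mul_comm, ((List.reverse_perm _).map _).prod_eq, ← Fin.prod_univ_def, Finset.prod_filter]
  congr 1
  refine Finset.prod_congr rfl fun x _ => ?_
  rw [leadCyc]
  split_ifs <;> simp

end MooreSum

/-! ### The characteristic polynomial over `K[X]` -/

section Charpoly

open Function Equiv Polynomial

variable {n : ℕ} {K L : Type*} [CommRing K] [CommRing L]

/-- The quaternion with the given coordinates, typed as an element of `ℍ[K]` so that the simp lemmas
for `Quaternion` apply to it. -/
def qmk (a b c d : K) : ℍ[K] := ⟨a, b, c, d⟩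

@[simp] theorem re_qmk (a b c d : K) : (qmk a b c d).re = a := rfl

@[simp] theorem imI_qmk (a b c d : K) : (qmk a b c d).imI = b := rfl

@[simp] theorem imJ_qmk (a b c d : K) : (qmk a b c d).imJ = c := rfl

@[simp] theorem imK_qmk (a b c d : K) : (qmk a b c d).imK = d := rfl

/-- The coordinatewise extension of a ring homomorphism to quaternions. -/
def qmap (f : K →+* L) : ℍ[K] →+* ℍ[L] where
  toFun q := qmk (f q.re) (f q.imI) (f q.imJ) (f q.imK)
  map_one' := by ext <;> simp
  map_zero' := by ext <;> simp
  map_mul' a b := by ext <;> simp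
  map_add' a b := by ext <;> simp

@[simp] theorem re_qmap (f : K →+* L) (q : ℍ[K]) : (qmap f q).re = f q.re := rfl

@[simp] theorem imI_qmap (f : K →+* L) (q : ℍ[K]) : (qmap f q).imI = f q.imI := rfl

@[simp] theorem imJ_qmap (f : K →+* L) (q : ℍ[K]) : (qmap f q).imJ = f q.imJ := rfl

@[simp] theorem imK_qmap (f : K →+* L) (q : ℍ[K]) : (qmap f q).imK = f q.imK := rfl

theorem qmap_coe (f : K →+* L) (a : K) : qmap f (a : ℍ[K]) = ((f a : L) : ℍ[L]) := by
  ext <;> simp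

theorem star_qmap (f : K →+* L) (q : ℍ[K]) : star (qmap f q) = qmap f (star q) := by
  ext <;> simp

theorem walk_map {D E : Type*} [Ring D] [Ring E] (g : D →+* E) (B : Matrix (Fin n) (Fin n) D)
    (f : Fin n → Fin n) (m : ℕ) (x : Fin n) : walk (B.map g) f m x = g (walk B f m x) := by
  induction m generalizing x with
  | zero => simp [walk]
  | succ m ih => simp [walk, ih]

theorem realMoore_map (f : K →+* L) (B : Matrix (Fin n) (Fin n) ℍ[K]) :
    realMoore (B.map (qmap f)) = f (realMoore B) := by
  simp [realMoore, map_sum, map_prod, sgn, cyc, walk_map]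

/-- The characteristic matrix `X · 1 - A`, with entries in the quaternions over `K[X]`. -/
def qcharmatrix (A : Matrix (Fin n) (Fin n) ℍ[K]) : Matrix (Fin n) (Fin n) ℍ[K[X]] :=
  Matrix.diagonal (fun _ => ((X : K[X]) : ℍ[K[X]])) - A.map (qmap C)

/-- The characteristic polynomial of `A`, defined through `realMoore`. -/
def qcharpoly (A : Matrix (Fin n) (Fin n) ℍ[K]) : K[X] := realMoore (qcharmatrix A)

theorem eval_qcharpoly (A : Matrix (Fin n) (Fin n) ℍ[K]) (l : K) :
    (qcharpoly A).eval l = realMoore (Matrix.diagonal (fun _ => (l : ℍ[K])) - A) := by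
  rw [qcharpoly, ← coe_evalRingHom, ← realMoore_map]
  congr 1
  ext1 i j
  by_cases h : i = j
  · subst h
    simp only [qcharmatrix, Matrix.map_apply, Matrix.sub_apply, Matrix.diagonal_apply_eq, map_sub,
      qmap_coe]
    congr 1
    · simp
    · ext <;> simp
  · simp only [qcharmatrix, Matrix.map_apply, Matrix.sub_apply, Matrix.diagonal_apply_ne _ h,
      map_sub, map_zero]
    congr 1
    ext <;> simp

theorem star_sub_quaternion (a b : ℍ[K]) : star (a - b) = star a - star b := by
  ext <;> simp

theorem star_qcharmatrix (A : Matrix (Fin n) (Fin n) ℍ[K]) (hA : ∀ i j, star (A i j) = A j i)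
    (i j : Fin n) : star (qcharmatrix A i j) = qcharmatrix A j i := by
  by_cases h : i = j
  · subst h
    rw [qcharmatrix, Matrix.sub_apply, Matrix.diagonal_apply_eq, Matrix.map_apply]
    rw [star_sub_quaternion, Quaternion.star_coe, star_qmap, hA]
  · rw [qcharmatrix, Matrix.sub_apply, Matrix.sub_apply, Matrix.diagonal_apply_ne _ h,
      Matrix.diagonal_apply_ne _ (Ne.symm h), Matrix.map_apply, Matrix.map_apply]
    rw [star_sub_quaternion, star_zero, star_qmap, hA]

theorem minimalPeriod_of_fixed {σ : Perm (Fin n)} {x : Fin n} (h : σ x = x) :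
    minimalPeriod σ x = 1 := minimalPeriod_eq_one_iff_isFixedPt.2 h

theorem re_cyc_qcharmatrix_fixed (A : Matrix (Fin n) (Fin n) ℍ[K]) {σ : Perm (Fin n)}
    {x : Fin n} (h : σ x = x) : (cyc (qcharmatrix A) σ x).re = X - C (A x x).re := by
  rw [cyc, minimalPeriod_of_fixed h]
  simp [walk, h, qcharmatrix]

/-- Along a nontrivial cycle only off-diagonal entries occur, so the product is constant in `X`. -/
theorem walk_qcharmatrix_of_ne (A : Matrix (Fin n) (Fin n) ℍ[K]) {σ : Perm (Fin n)}
    (m : ℕ) {x : Fin n} (h : σ x ≠ x) :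
    walk (qcharmatrix A) σ m x = qmap C (walk (-A) σ m x) := by
  induction m generalizing x with
  | zero => simp [walk]
  | succ m ih =>
    rw [walk, walk, map_mul, ih fun h' => h (σ.injective h')]
    congr 1
    simp [qcharmatrix, Matrix.diagonal_apply_ne _ (Ne.symm h)]

theorem re_cyc_qcharmatrix_of_ne (A : Matrix (Fin n) (Fin n) ℍ[K]) {σ : Perm (Fin n)}
    {x : Fin n} (h : σ x ≠ x) :
    (cyc (qcharmatrix A) σ x).re = C (cyc (-A) σ x).re := by
  rw [cyc, walk_qcharmatrix_of_ne A _ h, re_qmap, cyc]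

theorem isLeader_of_fixed {σ : Perm (Fin n)} {x : Fin n} (h : σ x = x) : IsLeader σ x :=
  fun _ hy => (hy.eq_of_left h).le

theorem re_finset_sum {α : Type*} (s : Finset α) (g : α → ℍ[K]) :
    (∑ a ∈ s, g a).re = ∑ a ∈ s, (g a).re := by
  classical
  induction s using Finset.induction_on with
  | empty => simp
  | insert a s ha ih => rw [Finset.sum_insert ha, Finset.sum_insert ha, Quaternion.re_add, ih]

/-- Jacobi's formula: only the factors of fixed points depend on `X`, and each has derivative `1`. -/
theorem derivative_qcharpoly (A : Matrix (Fin n) (Fin n) ℍ[K]) :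
    derivative (qcharpoly A) = ∑ k, (mooreAdj (qcharmatrix A) k k).re := by
  have hadj : ∀ k, (mooreAdj (qcharmatrix A) k k).re =
      ∑ σ : Perm (Fin n), if σ k = k then sgn K[X] σ * rest (qcharmatrix A) σ k else 0 := by
    intro k
    rw [mooreAdj, Matrix.of_apply, re_finset_sum, Finset.sum_filter]
    refine Finset.sum_congr rfl fun σ _ => ?_
    split_ifs with h
    · rw [minimalPeriod_of_fixed h, Nat.sub_self, walk, one_mul, Quaternion.re_coe]
    · rfl
  simp only [hadj]
  rw [Finset.sum_comm, qcharpoly, realMoore, derivative_sum]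
  refine Finset.sum_congr rfl fun σ _ => ?_
  rw [sgn, derivative_intCast_mul, derivative_prod_finset, Finset.mul_sum, Finset.sum_filter]
  refine Finset.sum_congr rfl fun k _ => ?_
  by_cases h : σ k = k
  · rw [if_pos h, if_pos (isLeader_of_fixed h), re_cyc_qcharmatrix_fixed A h, rest]
    simp only [derivative_sub, derivative_X, derivative_C, sub_zero, mul_one]
    congr 1
    refine Finset.prod_congr ?_ fun _ _ => rfl
    ext x
    simp only [Finset.mem_erase, Finset.mem_filter, Finset.mem_univ, true_and]
    rw [and_comm]
    refine and_congr_right fun _ => not_congr ⟨?_, fun hx => (hx.eq_of_left h).symm⟩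
    rintro rfl
    exact Perm.SameCycle.refl _ _
  · rw [if_neg h, re_cyc_qcharmatrix_of_ne A h]
    simp

/-- The degree of the term of `σ` is at most the number of fixed points of `σ`. -/
theorem degree_qcharpoly_term [Nontrivial K] (A : Matrix (Fin n) (Fin n) ℍ[K])
    {σ : Perm (Fin n)} (hσ : σ ≠ 1) :
    (sgn K[X] σ * ∏ x with IsLeader σ x, (cyc (qcharmatrix A) σ x).re).degree < (n : ℕ) := by
  have hterm : ∀ x, ((cyc (qcharmatrix A) σ x).re).natDegree ≤ if σ x = x then 1 else 0 := by
    intro x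
    split_ifs with h
    · rw [re_cyc_qcharmatrix_fixed A h, natDegree_X_sub_C]
    · rw [re_cyc_qcharmatrix_of_ne A h, natDegree_C]
  have hsgn : (sgn K[X] σ).natDegree = 0 := natDegree_intCast _
  have hcard : (Finset.univ.filter fun x => σ x = x).card < n := by
    have hex : ∃ x, σ x ≠ x := by
      by_contra! hall
      exact hσ (Equiv.ext hall)
    obtain ⟨x, hx⟩ := hex
    calc (Finset.univ.filter fun x => σ x = x).card < (Finset.univ : Finset (Fin n)).card :=
          Finset.card_lt_card (Finset.filter_ssubset.2 ⟨x, Finset.mem_univ x, hx⟩)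
      _ = n := by simp
  refine degree_le_natDegree.trans_lt ?_
  rw [Nat.cast_lt]
  calc _ ≤ (sgn K[X] σ).natDegree +
          (∏ x with IsLeader σ x, (cyc (qcharmatrix A) σ x).re).natDegree := natDegree_mul_le
    _ ≤ 0 + ∑ x with IsLeader σ x, if σ x = x then 1 else 0 := by
        rw [hsgn]
        gcongr
        exact (natDegree_prod_le _ _).trans (Finset.sum_le_sum fun x _ => hterm x)
    _ ≤ ∑ x, if σ x = x then 1 else 0 := by
        rw [zero_add]
        exact Finset.sum_le_sum_of_subset (Finset.filter_subset _ _)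
    _ = (Finset.univ.filter fun x => σ x = x).card := by
        rw [Finset.card_filter]
    _ < n := hcard

theorem monic_qcharpoly [Nontrivial K] (A : Matrix (Fin n) (Fin n) ℍ[K]) :
    (qcharpoly A).Monic ∧ (qcharpoly A).natDegree = n := by
  have hone : sgn K[X] (1 : Perm (Fin n)) *
      ∏ x with IsLeader (1 : Perm (Fin n)) x, (cyc (qcharmatrix A) 1 x).re =
      ∏ x, (X - C (A x x).re) := by
    have hf : (Finset.univ.filter fun x => IsLeader (1 : Perm (Fin n)) x) = Finset.univ :=
      Finset.filter_true_of_mem fun x _ => isLeader_of_fixed rfl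
    rw [hf, sgn, Perm.sign_one, Units.val_one, Int.cast_one, one_mul]
    exact Finset.prod_congr rfl fun x _ => re_cyc_qcharmatrix_fixed A rfl
  have hsplit : qcharpoly A = ∏ x, (X - C (A x x).re) +
      ∑ σ ∈ Finset.univ.erase (1 : Perm (Fin n)),
        sgn K[X] σ * ∏ x with IsLeader σ x, (cyc (qcharmatrix A) σ x).re := by
    rw [qcharpoly, realMoore, ← Finset.add_sum_erase _ _ (Finset.mem_univ 1), hone]
  have hm : (∏ x, (X - C (A x x).re)).Monic := monic_prod_X_sub_C _ _
  have hnd : (∏ x, (X - C (A x x).re)).natDegree = n := by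
    rw [natDegree_finsetProd_X_sub_C_eq_card]
    simp
  have hlt : (∑ σ ∈ Finset.univ.erase (1 : Perm (Fin n)),
        sgn K[X] σ * ∏ x with IsLeader σ x, (cyc (qcharmatrix A) σ x).re).degree <
      (∏ x, (X - C (A x x).re)).degree := by
    rw [degree_eq_natDegree hm.ne_zero, hnd]
    refine (degree_sum_le _ _).trans_lt ?_
    exact (Finset.sup_lt_iff (WithBot.bot_lt_coe n)).2 fun σ hσ =>
      degree_qcharpoly_term A (Finset.ne_of_mem_erase hσ)
  rw [hsplit]
  exact ⟨hm.add_of_left hlt, (natDegree_add_eq_left_of_degree_lt hlt).trans hnd⟩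

/-- Otherwise `r = p - q` satisfies `q r' = q' r`, and comparing the coefficients of
`X ^ (deg q + deg r)` in `q * X r' = X q' * r` gives `(deg q - deg r) · lc r = 0` with
`deg r < deg q`, which is impossible since positive integers are units in `K`. -/
theorem eq_of_logDeriv_eq [Algebra ℚ K] [Nontrivial K] {p q : K[X]} (hp : p.Monic)
    (hq : q.Monic) (hpq : p.natDegree = q.natDegree)
    (h : q * derivative p = derivative q * p) : p = q := by
  by_contra hne
  set r := p - q with hr
  have hr0 : r ≠ 0 := sub_ne_zero.2 hne
  have hdeg : r.natDegree < q.natDegree := by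
    have hlt : r.degree < p.degree := degree_sub_lt_left (by
      rw [degree_eq_natDegree hp.ne_zero, degree_eq_natDegree hq.ne_zero, hpq]) hp.ne_zero
      (by rw [hp.leadingCoeff, hq.leadingCoeff])
    rw [← hpq]
    exact natDegree_lt_natDegree hr0 hlt
  have hqr : q * (X * derivative r) = (X * derivative q) * r := by
    rw [hr, derivative_sub]
    linear_combination X * h
  have hXd : ∀ s : K[X], (X * derivative s).natDegree ≤ s.natDegree ∧
      (X * derivative s).coeff s.natDegree = s.natDegree * s.leadingCoeff := by
    intro s
    constructor
    · rw [natDegree_le_iff_coeff_eq_zero]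
      intro N hN
      obtain ⟨N, rfl⟩ := Nat.exists_eq_add_of_lt (Nat.zero_lt_of_lt hN)
      rw [zero_add, coeff_X_mul, coeff_derivative, coeff_eq_zero_of_natDegree_lt (by omega),
        zero_mul]
    · rcases Nat.eq_zero_or_pos s.natDegree with h0 | h0
      · rw [h0]
        simp
      · obtain ⟨N, hN⟩ := Nat.exists_eq_add_of_lt h0
        rw [leadingCoeff, hN, zero_add, coeff_X_mul, coeff_derivative]
        push_cast
        ring
  have hcoeff : (q * (X * derivative r)).coeff (q.natDegree + r.natDegree) =
      ((X * derivative q) * r).coeff (q.natDegree + r.natDegree) := by rw [hqr]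
  rw [coeff_mul_add_eq_of_natDegree_le le_rfl (hXd r).1, coeff_mul_add_eq_of_natDegree_le (hXd q).1 le_rfl,
    (hXd r).2, (hXd q).2, coeff_natDegree, coeff_natDegree, hq.leadingCoeff, one_mul,
    mul_one] at hcoeff
  have hzero : (((q.natDegree - r.natDegree : ℕ) : ℕ) : K) * r.leadingCoeff = 0 := by
    rw [Nat.cast_sub hdeg.le, sub_mul, hcoeff, sub_self]
  have hunit : IsUnit (((q.natDegree - r.natDegree : ℕ) : ℕ) : K) := by
    rw [← map_natCast (algebraMap ℚ K)]
    refine IsUnit.map _ (IsUnit.mk0 _ ?_)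
    rw [Nat.cast_ne_zero]
    omega
  rw [hunit.mul_right_eq_zero] at hzero
  exact hr0 (leadingCoeff_eq_zero.1 hzero)

theorem re_trace_mul_comm (M N : Matrix (Fin n) (Fin n) ℍ[K]) :
    ∑ i, ((M * N) i i).re = ∑ i, ((N * M) i i).re := by
  simp only [Matrix.mul_apply, re_finset_sum]
  rw [Finset.sum_comm]
  simp only [re_mul_comm]

/-- The characteristic polynomial of a diagonalizable Hermitian matrix over `ℍ[K]` splits as
expected. -/
theorem qcharpoly_eq_prod [Algebra ℚ K] [Nontrivial K] (A U V : Matrix (Fin n) (Fin n) ℍ[K])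
    (hA : ∀ i j, star (A i j) = A j i) (hVU : V * U = 1) (hUV : U * V = 1) (lam : Fin n → K)
    (hlam : U * A * V = Matrix.diagonal fun i => (lam i : ℍ[K])) :
    qcharpoly A = ∏ i, (X - C (lam i)) := by
  have hmap : ∀ M N : Matrix (Fin n) (Fin n) ℍ[K],
      (M * N).map (qmap (C : K →+* K[X])) = M.map (qmap C) * N.map (qmap C) :=
    fun M N => Matrix.map_mul
  have hmap1 : (1 : Matrix (Fin n) (Fin n) ℍ[K]).map (qmap (C : K →+* K[X])) = 1 :=
    Matrix.map_one _ (map_zero _) (map_one _)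
  set U' := U.map (qmap (C : K →+* K[X])) with hU'
  set V' := V.map (qmap (C : K →+* K[X])) with hV'
  have hVU' : V' * U' = 1 := by rw [hU', hV', ← hmap, hVU, hmap1]
  have hUV' : U' * V' = 1 := by rw [hU', hV', ← hmap, hUV, hmap1]
  have hscalar : ∀ c : K[X], U' * Matrix.diagonal (fun _ => (c : ℍ[K[X]])) =
      Matrix.diagonal (fun _ => (c : ℍ[K[X]])) * U' := by
    intro c
    ext1 i j
    rw [Matrix.mul_diagonal, Matrix.diagonal_mul, Quaternion.coe_commutes]
  have hconj : U' * qcharmatrix A * V' =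
      Matrix.diagonal fun i => ((X - C (lam i) : K[X]) : ℍ[K[X]]) := by
    have h1 : U' * A.map (qmap C) * V' =
        Matrix.diagonal fun i => ((C (lam i) : K[X]) : ℍ[K[X]]) := by
      rw [hU', hV', ← hmap, ← hmap, hlam, Matrix.diagonal_map (map_zero _)]
      congr 1
      funext i
      exact qmap_coe _ _
    rw [qcharmatrix, mul_sub, sub_mul, h1, hscalar, mul_assoc, hUV', mul_one,
      Matrix.diagonal_sub]
    simp only [Quaternion.coe_sub]
  set M := U' * mooreAdj (qcharmatrix A) * V' with hM
  have hprod : (Matrix.diagonal fun i => ((X - C (lam i) : K[X]) : ℍ[K[X]])) * M =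
      Matrix.diagonal fun _ => ((qcharpoly A : K[X]) : ℍ[K[X]]) := by
    calc _ = U' * (qcharmatrix A * ((V' * U') * mooreAdj (qcharmatrix A))) * V' := by
          rw [← hconj, hM]
          simp only [mul_assoc]
      _ = U' * (Matrix.diagonal fun _ => ((qcharpoly A : K[X]) : ℍ[K[X]])) * V' := by
          rw [hVU', one_mul, mul_mooreAdj _ (star_qcharmatrix A hA), qcharpoly]
      _ = _ := by rw [hscalar, mul_assoc, hUV', mul_one]
  have hdiag : ∀ i, (X - C (lam i)) * (M i i).re = qcharpoly A := by
    intro i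
    have := congrArg (fun N : Matrix (Fin n) (Fin n) ℍ[K[X]] => (N i i).re) hprod
    simp only [Matrix.diagonal_mul, Matrix.diagonal_apply_eq, Quaternion.re_coe] at this
    rw [← this]
    simp [Quaternion.re_mul]
  have htr : ∑ i, (M i i).re = derivative (qcharpoly A) := by
    rw [derivative_qcharpoly, hM, re_trace_mul_comm, ← mul_assoc, hVU', one_mul]
  obtain ⟨hmonic, hdeg⟩ := monic_qcharpoly A
  refine eq_of_logDeriv_eq hmonic (monic_prod_X_sub_C _ _) ?_ ?_
  · rw [hdeg, natDegree_finsetProd_X_sub_C_eq_card]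
    simp
  · rw [← htr, derivative_prod_finset, Finset.mul_sum, Finset.sum_mul]
    refine Finset.sum_congr rfl fun i _ => ?_
    rw [← Finset.mul_prod_erase _ _ (Finset.mem_univ i)]
    simp only [derivative_sub, derivative_X, derivative_C, sub_zero, mul_one]
    rw [← hdiag i]
    ring

end Charpoly

/-! ### Dual quaternions as quaternions over the dual numbers -/

section Transfer

open TrivSqZeroExt (inl inr)

/-- The identification of dual numbers over quaternions with quaternions over dual numbers. -/
def splitDQ : DualQuaternion →+* ℍ[DualNumber ℝ] where
  toFun q := qmk (inl q.fst.re + inr q.snd.re) (inl q.fst.imI + inr q.snd.imI)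
    (inl q.fst.imJ + inr q.snd.imJ) (inl q.fst.imK + inr q.snd.imK)
  map_one' := by ext <;> simp
  map_zero' := by ext <;> simp
  map_mul' a b := by ext <;> simp <;> ring
  map_add' a b := by ext <;> simp

theorem re_splitDQ (q : DualQuaternion) :
    (splitDQ q).re = inl q.fst.re + inr q.snd.re := rfl

theorem imI_splitDQ (q : DualQuaternion) :
    (splitDQ q).imI = inl q.fst.imI + inr q.snd.imI := rfl

theorem imJ_splitDQ (q : DualQuaternion) :
    (splitDQ q).imJ = inl q.fst.imJ + inr q.snd.imJ := rfl

theorem imK_splitDQ (q : DualQuaternion) :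
    (splitDQ q).imK = inl q.fst.imK + inr q.snd.imK := rfl

theorem fst_star_dq (q : DualQuaternion) : (star q).fst = star q.fst := rfl

theorem snd_star_dq (q : DualQuaternion) : (star q).snd = star q.snd := rfl

theorem fst_toDQ (d : DualNumber ℝ) : (toDQ d).fst = (d.fst : ℍ[ℝ]) := rfl

theorem snd_toDQ (d : DualNumber ℝ) : (toDQ d).snd = (d.snd : ℍ[ℝ]) := rfl

theorem splitDQ_injective : Function.Injective splitDQ := by
  intro p q h
  have h1 := congrArg (fun x => x.re) h
  have h2 := congrArg (fun x => x.imI) h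
  have h3 := congrArg (fun x => x.imJ) h
  have h4 := congrArg (fun x => x.imK) h
  simp only [re_splitDQ, imI_splitDQ, imJ_splitDQ, imK_splitDQ, TrivSqZeroExt.ext_iff,
    TrivSqZeroExt.fst_add, TrivSqZeroExt.snd_add, TrivSqZeroExt.fst_inl, TrivSqZeroExt.fst_inr,
    TrivSqZeroExt.snd_inl, TrivSqZeroExt.snd_inr, add_zero, zero_add] at h1 h2 h3 h4
  exact TrivSqZeroExt.ext (Quaternion.ext _ _ h1.1 h2.1 h3.1 h4.1)
    (Quaternion.ext _ _ h1.2 h2.2 h3.2 h4.2)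

theorem splitDQ_star (q : DualQuaternion) : splitDQ (star q) = star (splitDQ q) := by
  ext <;> simp [re_splitDQ, imI_splitDQ, imJ_splitDQ, imK_splitDQ, fst_star_dq, snd_star_dq]

theorem splitDQ_toDQ (d : DualNumber ℝ) : splitDQ (toDQ d) = (d : ℍ[DualNumber ℝ]) := by
  ext <;> simp [re_splitDQ, imI_splitDQ, imJ_splitDQ, imK_splitDQ, fst_toDQ, snd_toDQ]

theorem map_Mdet {n : ℕ} {R S : Type*} [Ring R] [Ring S] (f : R →+* S)
    (B : Matrix (Fin n) (Fin n) R) : f (Mdet B) = Mdet (B.map f) := by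
  simp only [Mdet, map_sum, map_mul, map_intCast, map_list_prod, List.map_map]
  rfl

/-- Noetherian rings are stably finite, so a one-sided inverse of a square matrix over
`DualQuaternion` is two-sided. -/
instance : IsNoetherianRing DualQuaternion := by
  have : Module.Finite ℝ DualQuaternion := inferInstanceAs (Module.Finite ℝ (ℍ[ℝ] × ℍ[ℝ]))
  have : IsScalarTower ℝ DualQuaternion DualQuaternion := ⟨fun r x y => by ext <;> simp⟩
  exact isNoetherian_of_tower ℝ inferInstance

end Transfer

/-- For a dual quaternion Hermitian matrix `A` with eigenvalues `λ₁, …, λ_n` and any dual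
number `λ`, the characteristic polynomial `p(λ) = Mdet(λI − A)` satisfies
`p(λ) = (λ − λ₁)(λ − λ₂) ⋯ (λ − λ_n)`. -/
theorem statement15 {n : ℕ} (A : Matrix (Fin n) (Fin n) DualQuaternion) (hA : Aᴴ = A)
    (lam : Fin n → DualNumber ℝ) (hlam : HasEigenvalues A lam) (l : DualNumber ℝ) :
    Mdet (Matrix.diagonal (fun _ => toDQ l) - A) = toDQ (∏ i, (l - lam i)) := by
  obtain ⟨U, hU, hdiag⟩ := hlam
  have hU' : U * Uᴴ = 1 := mul_eq_one_comm.1 hU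
  have hmap : ∀ M N : Matrix (Fin n) (Fin n) DualQuaternion,
      (M * N).map splitDQ = M.map splitDQ * N.map splitDQ := fun M N => Matrix.map_mul
  have hmap1 : (1 : Matrix (Fin n) (Fin n) DualQuaternion).map splitDQ = 1 :=
    Matrix.map_one _ (map_zero _) (map_one _)
  have hmapdiag : ∀ d : Fin n → DualNumber ℝ, (Matrix.diagonal fun i => toDQ (d i)).map splitDQ =
      Matrix.diagonal fun i => (d i : ℍ[DualNumber ℝ]) := by
    intro d
    rw [Matrix.diagonal_map (map_zero _)]
    congr 1
    funext i
    exact splitDQ_toDQ _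
  have hAstar : ∀ i j, star (A.map splitDQ i j) = A.map splitDQ j i := by
    intro i j
    rw [Matrix.map_apply, Matrix.map_apply, ← splitDQ_star, ← Matrix.conjTranspose_apply, hA]
  have hpoly : qcharpoly (A.map splitDQ) = ∏ i, (Polynomial.X - Polynomial.C (lam i)) := by
    refine qcharpoly_eq_prod _ (U.map splitDQ) (Uᴴ.map splitDQ) hAstar ?_ ?_ lam ?_
    · rw [← hmap, hU, hmap1]
    · rw [← hmap, hU', hmap1]
    · rw [← hmap, ← hmap, hdiag, hmapdiag]
  set B : Matrix (Fin n) (Fin n) ℍ[DualNumber ℝ] :=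
    Matrix.diagonal (fun _ => (l : ℍ[DualNumber ℝ])) - A.map splitDQ with hB
  have hstar : ∀ i j, star (B i j) = B j i := by
    intro i j
    rw [hB, Matrix.sub_apply, Matrix.sub_apply, star_sub_quaternion, hAstar]
    congr 1
    by_cases h : i = j
    · subst h
      rw [Matrix.diagonal_apply_eq, Quaternion.star_coe]
    · rw [Matrix.diagonal_apply_ne _ h, Matrix.diagonal_apply_ne _ (Ne.symm h), star_zero]
  apply splitDQ_injective
  rw [map_Mdet, Matrix.map_sub _ (map_sub _), hmapdiag fun _ => l, ← hB, Mdet_eq_realMoore _ hstar,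
    ← eval_qcharpoly, hpoly, Polynomial.eval_prod, splitDQ_toDQ]
  simp

end DQPaper
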